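/- arXiv:2405.15091 — 3 statements merged into one kernel-verified Lean document; each statement's English description precedes it below -/
import Mathlib

section
/- Let I and J be ideals of a symplectic alternating algebra L over a field 𝔽 and let x ∈ L. Then J·x ⊆ I if and only if I^⊥·x ⊆ J^⊥ (where for a subspace U, U·x denotes {u·x : u ∈ U}). -/
/-! For all `u, v, x` the invariance of the form and the alternating laws give
`(v·x, u) = -(u·x, v)`.  So both conditions say that `(u·x, v) = 0` for all `u ∈ J` and
`v ∈ I^⊥`: for the right-hand one this is immediate, and for the left-hand one it is
`I = I^⊥⊥` (`mem_of_forall_perp_form_eq_zero`), which holds because `L` is finite-dimensional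
and the form is nondegenerate. -/

variable {𝔽 : Type*} [Field 𝔽] {L : Type*} [AddCommGroup L] [Module 𝔽 L]

structure SymplecticAlternatingAlgebra (𝔽 L : Type*) [Field 𝔽] [AddCommGroup L]
    [Module 𝔽 L] where
  form : L →ₗ[𝔽] L →ₗ[𝔽] 𝔽
  mul : L →ₗ[𝔽] L →ₗ[𝔽] L
  form_alt : ∀ x, form x x = 0
  form_nondeg : ∀ x, (∀ y, form x y = 0) → x = 0
  mul_alt : ∀ x, mul x x = 0
  compat : ∀ u v w, form (mul u v) w = form (mul v w) u

namespace SymplecticAlternatingAlgebra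

variable (S : SymplecticAlternatingAlgebra 𝔽 L)

/-- `U·V`, the span of all products `u·v`. -/
def prodSub (U V : Submodule 𝔽 L) : Submodule 𝔽 L := Submodule.map₂ S.mul U V

/-- An ideal: `I·L ⊆ I`. -/
def IsIdeal (I : Submodule 𝔽 L) : Prop := S.prodSub I ⊤ ≤ I

/-- Orthogonal complement with respect to the form. -/
def perp (U : Submodule 𝔽 L) : Submodule 𝔽 L where
  carrier := {x | ∀ u ∈ U, S.form x u = 0}
  add_mem' := by
    intro a b ha hb u hu
    simp [map_add, ha u hu, hb u hu]
  zero_mem' := by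
    intro u hu
    simp
  smul_mem' := by
    intro c a ha u hu
    simp [ha u hu]

/-- `lcs n = L^(n+1)`: the lower central series, `lcs 0 = L¹ = L`. -/
def lcs : ℕ → Submodule 𝔽 L
  | 0 => ⊤
  | n + 1 => S.prodSub (lcs n) ⊤

/-- `ucs n = Z_n(L)`: the upper central series. -/
def ucs : ℕ → Submodule 𝔽 L
  | 0 => ⊥
  | n + 1 => ⨅ y : L, (ucs n).comap (S.mul.flip y)

/-- The center `Z(L)`. -/
def center : Submodule 𝔽 L := ⨅ y : L, LinearMap.ker (S.mul.flip y)

/-- Nilpotency: some term of the lower central series vanishes. -/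
def IsNilpotent : Prop := ∃ n, S.lcs n = ⊥

/-- `s` generates `L` as an algebra: the smallest subspace containing `s`
and closed under the multiplication is `L` itself. -/
def Generates (s : Set L) : Prop :=
  ∀ M : Submodule 𝔽 L, s ⊆ (M : Set L) → S.prodSub M M ≤ M → M = ⊤

end SymplecticAlternatingAlgebra

open SymplecticAlternatingAlgebra Module


namespace SymplecticAlternatingAlgebra

theorem form_swap (S : SymplecticAlternatingAlgebra 𝔽 L) (a b : L) :
    S.form a b = -S.form b a := by
  have h := S.form_alt (a + b)
  simp only [map_add, LinearMap.add_apply, S.form_alt, zero_add, add_zero] at h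
  exact eq_neg_of_add_eq_zero_right h

theorem mul_swap (S : SymplecticAlternatingAlgebra 𝔽 L) (a b : L) :
    S.mul a b = -S.mul b a := by
  have h := S.mul_alt (a + b)
  simp only [map_add, LinearMap.add_apply, S.mul_alt, zero_add, add_zero] at h
  exact eq_neg_of_add_eq_zero_right h

/-- Right multiplication by `x` is self-adjoint, `(v·x, u) = (v, u·x)`; the sign comes from
swapping the arguments of the form. -/
theorem form_mul_right (S : SymplecticAlternatingAlgebra 𝔽 L) (u v x : L) :
    S.form (S.mul v x) u = -S.form (S.mul u x) v := by
  rw [S.compat u x v, S.mul_swap x v]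
  simp

/-- The inclusion `I^⊥⊥ ⊆ I`: a functional vanishing on `I` but not at `y` is represented,
by nondegeneracy, by an element of `I^⊥`. -/
theorem mem_of_forall_perp_form_eq_zero [FiniteDimensional 𝔽 L]
    (S : SymplecticAlternatingAlgebra 𝔽 L) (I : Submodule 𝔽 L) (y : L)
    (h : ∀ v ∈ S.perp I, S.form v y = 0) : y ∈ I := by
  by_contra hy
  obtain ⟨f, hfy, hfI⟩ := Submodule.exists_le_ker_of_notMem hy
  have hinj : Function.Injective S.form :=
    (injective_iff_map_eq_zero S.form).2 fun a ha =>
      S.form_nondeg a fun b => by rw [ha, LinearMap.zero_apply]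
  obtain ⟨v, rfl⟩ := (LinearMap.injective_iff_surjective_of_finrank_eq_finrank
    (Subspace.dual_finrank_eq (K := 𝔽) (V := L)).symm).1 hinj f
  exact hfy (h v fun u hu => hfI hu)

end SymplecticAlternatingAlgebra

theorem mul_right_mem_iff_perp [FiniteDimensional 𝔽 L]
    (S : SymplecticAlternatingAlgebra 𝔽 L) (I J : Submodule 𝔽 L)
    (hI : S.IsIdeal I) (hJ : S.IsIdeal J) (x : L) :
    (∀ u ∈ J, S.mul u x ∈ I) ↔ (∀ v ∈ S.perp I, S.mul v x ∈ S.perp J) := by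
  constructor
  · intro h v hv u hu
    rw [S.form_mul_right, S.form_swap, hv _ (h u hu), neg_zero, neg_zero]
  · intro h u hu
    refine S.mem_of_forall_perp_form_eq_zero I _ fun v hv => ?_
    rw [S.form_swap, ← S.form_mul_right]
    exact h v hv u hu
end

section
/- No term of the lower central series of a symplectic alternating algebra L over a field 𝔽 has dimension 1; that is, dim L^n ≠ 1 for every n ≥ 1. Equivalently, no term of the upper central series of L has codimension 1. -/
/-!
The upper central series is orthogonal to the lower one: `Z_n = (L^{n+1})^⊥`
(`mem_ucs_iff`), because `(x·y, u) = -(x, u·y)`. Hence both claims reduce to the upper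
central series, where the point is that `L = Z_n + 𝔽x` forces `Z_n = L`
(`ucs_eq_top_of_sup_span`). For `n = 0` this holds since the form vanishes on a line. For
`n = m + 1`, writing `y = z + c x` with `z ∈ Z_{m+1}` gives `x·y = x·z ∈ Z_m`,
so `x ∈ Z_{m+1}`.
-/

variable {𝔽 : Type*} [Field 𝔽] {L : Type*} [AddCommGroup L] [Module 𝔽 L]

open SymplecticAlternatingAlgebra Module

namespace SymplecticAlternatingAlgebra

lemma form_swap_s11 {𝔽 L : Type*} [Field 𝔽] [AddCommGroup L] [Module 𝔽 L]
    (S : SymplecticAlternatingAlgebra 𝔽 L) (x y : L) : S.form x y = - S.form y x := by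
  have h := S.form_alt (x + y)
  simp only [map_add, LinearMap.add_apply, S.form_alt, zero_add, add_zero] at h
  linear_combination h

lemma mul_swap_s11 {𝔽 L : Type*} [Field 𝔽] [AddCommGroup L] [Module 𝔽 L]
    (S : SymplecticAlternatingAlgebra 𝔽 L) (x y : L) : S.mul x y = - S.mul y x := by
  have h := S.mul_alt (x + y)
  simp only [map_add, LinearMap.add_apply, S.mul_alt, zero_add, add_zero] at h
  exact eq_neg_of_add_eq_zero_right h

lemma form_mul_left {𝔽 L : Type*} [Field 𝔽] [AddCommGroup L] [Module 𝔽 L]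
    (S : SymplecticAlternatingAlgebra 𝔽 L) (x y u : L) :
    S.form (S.mul x y) u = S.form x (S.mul u y) := by
  rw [S.compat, S.form_swap_s11, S.mul_swap_s11 y u, map_neg, neg_neg]

lemma mem_ucs_succ {𝔽 L : Type*} [Field 𝔽] [AddCommGroup L] [Module 𝔽 L]
    (S : SymplecticAlternatingAlgebra 𝔽 L) (n : ℕ) (x : L) :
    x ∈ S.ucs (n + 1) ↔ ∀ y, S.mul x y ∈ S.ucs n := by
  simp [ucs, Submodule.mem_iInf]

/-- `Z_n` is the orthogonal complement of `L^{n+1}`. -/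
lemma mem_ucs_iff {𝔽 L : Type*} [Field 𝔽] [AddCommGroup L] [Module 𝔽 L]
    (S : SymplecticAlternatingAlgebra 𝔽 L) (n : ℕ) (x : L) :
    x ∈ S.ucs n ↔ ∀ u ∈ S.lcs n, S.form x u = 0 := by
  induction n generalizing x with
  | zero =>
    simp only [ucs, lcs, Submodule.mem_bot, Submodule.mem_top, true_imp_iff]
    exact ⟨fun h => by simp [h], S.form_nondeg x⟩
  | succ n ih =>
    rw [mem_ucs_succ]
    have key : S.lcs (n + 1) ≤ LinearMap.ker (S.form x) ↔
        ∀ u ∈ S.lcs n, ∀ y ∈ (⊤ : Submodule 𝔽 L), S.mul u y ∈ LinearMap.ker (S.form x) :=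
      Submodule.map₂_le
    refine Iff.trans ?_ (Iff.trans key.symm Iff.rfl)
    simp only [ih, form_mul_left, LinearMap.mem_ker, Submodule.mem_top, true_imp_iff]
    exact ⟨fun h u hu y => h y u hu, fun h y u hu => h u hu y⟩

lemma ucs_eq_top_of_sup_span {𝔽 L : Type*} [Field 𝔽] [AddCommGroup L] [Module 𝔽 L]
    (S : SymplecticAlternatingAlgebra 𝔽 L) (n : ℕ) (x : L)
    (h : ∀ y, ∃ c : 𝔽, y - c • x ∈ S.ucs n) : S.ucs n = ⊤ := by
  suffices hx : x ∈ S.ucs n by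
    refine eq_top_iff.2 fun y _ => ?_
    obtain ⟨c, hc⟩ := h y
    simpa using add_mem hc ((S.ucs n).smul_mem c hx)
  cases n with
  | zero =>
    refine (Submodule.mem_bot 𝔽).2 (S.form_nondeg x fun y => ?_)
    obtain ⟨c, hc⟩ := h y
    rw [sub_eq_zero.1 ((Submodule.mem_bot 𝔽).1 hc), map_smul, S.form_alt, smul_zero]
  | succ n =>
    refine (S.mem_ucs_succ n x).2 fun y => ?_
    obtain ⟨c, hc⟩ := h y
    have h1 := (S.mem_ucs_succ n _).1 hc x
    rw [map_sub, map_smul, LinearMap.sub_apply, LinearMap.smul_apply, S.mul_alt, smul_zero,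
      sub_zero] at h1
    rw [S.mul_swap_s11]
    exact neg_mem h1

end SymplecticAlternatingAlgebra

theorem lcs_finrank_ne_one [FiniteDimensional 𝔽 L]
    (S : SymplecticAlternatingAlgebra 𝔽 L) :
    (∀ n : ℕ, Module.finrank 𝔽 (S.lcs n) ≠ 1) ∧
    (∀ n : ℕ, Module.finrank 𝔽 (L ⧸ S.ucs n) ≠ 1) := by
  refine ⟨fun n hn => ?_, fun n hn => ?_⟩
  · obtain ⟨⟨w, hw⟩, hw0, hspan⟩ := finrank_eq_one_iff'.1 hn
    -- `L^{n+1} = 𝔽w`, so `Z_n` is the kernel of the nonzero functional `(·, w)`.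
    have hmem : ∀ x, x ∈ S.ucs n ↔ S.form x w = 0 := fun x => by
      rw [S.mem_ucs_iff]
      refine ⟨fun h => h w hw, fun h u hu => ?_⟩
      obtain ⟨c, hc⟩ := hspan ⟨u, hu⟩
      have hc' : c • w = u := congrArg Subtype.val hc
      rw [← hc', map_smul, h, smul_zero]
    obtain ⟨x, hx⟩ : ∃ x, S.form x w ≠ 0 := by
      by_contra! hall
      refine hw0 (Subtype.ext (S.form_nondeg w fun y => ?_))
      rw [S.form_swap_s11, hall, neg_zero]
    have htop := S.ucs_eq_top_of_sup_span n x fun y =>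
      ⟨S.form y w / S.form x w, (hmem _).2 (by simp [hx])⟩
    exact hx ((hmem x).1 (htop ▸ Submodule.mem_top))
  · obtain ⟨v, hv0, hspan⟩ := finrank_eq_one_iff'.1 hn
    obtain ⟨x, rfl⟩ := (S.ucs n).mkQ_surjective v
    have htop := S.ucs_eq_top_of_sup_span n x fun y => by
      obtain ⟨c, hc⟩ := hspan ((S.ucs n).mkQ y)
      refine ⟨c, (Submodule.Quotient.mk_eq_zero _).1 ?_⟩
      exact (map_sub (S.ucs n).mkQ _ _).trans (by rw [map_smul, hc, sub_self])
    exact hv0 ((Submodule.Quotient.mk_eq_zero _).2 (htop ▸ Submodule.mem_top))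
end

section
/- Let L be a nilpotent symplectic alternating algebra over a field 𝔽. Then every ideal of L of dimension 2 is contained in the center Z(L). Equivalently, every ideal of codimension 2 contains L². -/
/-!
Nilpotency makes `I·L` a proper subspace of a nonzero ideal `I`, so `dim I = 2` gives
`dim (I·L) ≤ 1`. Suppose `z = x·y ≠ 0` with `x ∈ I`. Every `x·w` is a multiple `f(w) z`, and
`(y, w) ↦ (x·y, w)` is an alternating form; an alternating form `f(y)(z, w)` of rank at most one
vanishes, so `(z, w) = 0` for all `w`, whence `z = 0` by nondegeneracy. This settles the
two-dimensional ideals.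

For an ideal `I` of codimension 2, its orthogonal complement is an ideal of dimension 2, hence
central, and `(u·v, p) = (v·p, u) = 0` for `p ∈ I^⊥` puts `u·v` in `I^⊥⊥ = I`.
-/

variable {𝔽 : Type*} [Field 𝔽] {L : Type*} [AddCommGroup L] [Module 𝔽 L]

open SymplecticAlternatingAlgebra Module

namespace SymplecticAlternatingAlgebra

lemma mul_skew (S : SymplecticAlternatingAlgebra 𝔽 L) (x y : L) :
    S.mul x y = -S.mul y x :=
  (LinearMap.IsAlt.neg (B := S.mul) S.mul_alt y x).symm

lemma form_skew (S : SymplecticAlternatingAlgebra 𝔽 L) (x y : L) :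
    S.form x y = -S.form y x :=
  (LinearMap.IsAlt.neg (B := S.form) S.form_alt y x).symm

lemma form_mul_self (S : SymplecticAlternatingAlgebra 𝔽 L) (x y : L) :
    S.form (S.mul x y) y = 0 := by
  rw [S.compat, S.mul_alt]; simp

lemma form_mul_swap (S : SymplecticAlternatingAlgebra 𝔽 L) (x y w : L) :
    S.form (S.mul x w) y = -S.form (S.mul x y) w := by
  rw [S.compat x w, S.compat x y, S.mul_skew w y]; simp

lemma mul_mem_prodSub (S : SymplecticAlternatingAlgebra 𝔽 L) {I : Submodule 𝔽 L} {x : L}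
    (hx : x ∈ I) (y : L) : S.mul x y ∈ S.prodSub I ⊤ :=
  Submodule.apply_mem_map₂ _ hx Submodule.mem_top

/-- If `I·L = I`, then `I` lies in every term of the lower central series. -/
lemma prodSub_ne_self (S : SymplecticAlternatingAlgebra 𝔽 L) (hnil : S.IsNilpotent)
    {I : Submodule 𝔽 L} (hI : I ≠ ⊥) : S.prodSub I ⊤ ≠ I := by
  intro h
  obtain ⟨n, hn⟩ := hnil
  have key : ∀ n, I ≤ S.lcs n := by
    intro n
    induction n with
    | zero => exact le_top
    | succ k ih => exact h.symm.le.trans (Submodule.map₂_le_map₂_left ih)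
  exact hI (le_bot_iff.mp (hn ▸ key n))

lemma le_center_of_finrank_two [FiniteDimensional 𝔽 L]
    (S : SymplecticAlternatingAlgebra 𝔽 L) (hnil : S.IsNilpotent) {I : Submodule 𝔽 L}
    (hI : S.IsIdeal I) (h2 : Module.finrank 𝔽 I = 2) : I ≤ S.center := by
  have hne : I ≠ ⊥ := by
    rintro rfl
    simp at h2
  have hlt : Module.finrank 𝔽 (S.prodSub I ⊤) < Module.finrank 𝔽 I :=
    Submodule.finrank_lt_finrank_of_lt (lt_of_le_of_ne hI (S.prodSub_ne_self hnil hne))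
  intro x hx
  simp only [center, Submodule.mem_iInf, LinearMap.mem_ker, LinearMap.flip_apply]
  intro y
  by_contra hz
  have hline : ∀ w, ∃ c : 𝔽, c • S.mul x y = S.mul x w := by
    obtain ⟨v, hv⟩ := finrank_le_one_iff.mp (show Module.finrank 𝔽 (S.prodSub I ⊤) ≤ 1 by omega)
    intro w
    obtain ⟨a, ha⟩ := hv ⟨_, S.mul_mem_prodSub hx y⟩
    obtain ⟨b, hb⟩ := hv ⟨_, S.mul_mem_prodSub hx w⟩
    have ha' : a • (v : L) = S.mul x y := congrArg Subtype.val ha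
    have hb' : b • (v : L) = S.mul x w := congrArg Subtype.val hb
    have ha0 : a ≠ 0 := by
      rintro rfl
      exact hz (by rw [← ha', zero_smul])
    exact ⟨b * a⁻¹, by rw [← ha', ← hb', smul_smul, mul_assoc, inv_mul_cancel₀ ha0, mul_one]⟩
  -- With `x·w = c (x·y)`: `(x·y, w) = -(x·w, y) = -c (x·y, y) = 0`.
  refine hz (S.form_nondeg _ fun w => ?_)
  obtain ⟨c, hc⟩ := hline w
  rw [← neg_eq_zero, ← S.form_mul_swap, ← hc, map_smul, LinearMap.smul_apply,
    S.form_mul_self, smul_zero]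

end SymplecticAlternatingAlgebra

theorem two_dim_ideal_le_center [FiniteDimensional 𝔽 L]
    (S : SymplecticAlternatingAlgebra 𝔽 L) (hnil : S.IsNilpotent) :
    (∀ I : Submodule 𝔽 L, S.IsIdeal I → Module.finrank 𝔽 I = 2 → I ≤ S.center) ∧
    (∀ I : Submodule 𝔽 L, S.IsIdeal I →
      Module.finrank 𝔽 I + 2 = Module.finrank 𝔽 L → S.lcs 1 ≤ I) := by
  refine ⟨fun I hI h2 => S.le_center_of_finrank_two hnil hI h2, fun I hI hcodim => ?_⟩
  let B : LinearMap.BilinForm 𝔽 L := S.form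
  have hrefl : B.IsRefl := fun x y h => by
    change S.form y x = 0
    rw [S.form_skew, neg_eq_zero]
    exact h
  have hnd : B.Nondegenerate :=
    ⟨S.form_nondeg, fun x h => S.form_nondeg x fun y => hrefl _ _ (h y)⟩
  have hperp : S.IsIdeal (B.orthogonal I) := by
    refine Submodule.map₂_le.mpr fun p hp y _ i hi => hrefl _ _ ?_
    change S.form (S.mul p y) i = 0
    rw [S.compat, S.mul_skew, map_neg, LinearMap.neg_apply, neg_eq_zero]
    exact hp _ (hI (S.mul_mem_prodSub hi y))
  have hdim : Module.finrank 𝔽 (B.orthogonal I) = 2 := by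
    rw [LinearMap.BilinForm.finrank_orthogonal hnd]
    omega
  have hcen := S.le_center_of_finrank_two hnil hperp hdim
  refine Submodule.map₂_le.mpr fun u _ v _ => ?_
  rw [← LinearMap.BilinForm.orthogonal_orthogonal hnd hrefl I]
  intro p hp
  refine hrefl _ _ ?_
  change S.form (S.mul u v) p = 0
  have hpv : S.mul p v = 0 := by
    have := hcen hp
    simp only [center, Submodule.mem_iInf, LinearMap.mem_ker, LinearMap.flip_apply] at this
    exact this v
  rw [S.compat, S.mul_skew, hpv]
  simp
end
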